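/- Let d ≥ 1, 1 ≤ p < ∞, 1 ≤ r < ∞ and s > d/r. For a sequence c define the weak scaling function s̃_c(p) = sup{ α ∈ (0,1) : c ∈ W((1−α)p, p) }. Set α̃ = 2s/(2s+d) if r > pd/(2s+d), and α̃ = 2(s − d/r + d/p)/(2(s − d/r) + d) otherwise. Then the set of c ∈ b^{s,∞}_r with s̃_c(p) ≠ α̃ is a Haar-null subset of b^{s,∞}_r. -/

import Mathlib

/-!
Write `w₀ = (1 - α̃) p`. It equals `pd/(2s+d)`, which is `< r`, in the dense regime, and
`d(p-2)/(2(s-d/r)+d)`, which is `≥ r`, in the sparse one.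

*Lower bound on the weak scaling function, for every `c`.* Chebyshev's inequality bounds the
`W(w,p)` quasi-norm by `Σ_j 2^{j(dp/2-d)} Σ_k |c_{j,k}|^w`. Comparing `ℓ^w` and `ℓ^r` at each scale,
by Hölder's inequality if `w ≤ r` (`memWBesov_dense`) and by `ℓ^r ⊆ ℓ^w` if `w ≥ r`
(`memWBesov_sparse`), makes this a convergent geometric series for `w` slightly larger than `w₀`.

*Upper bound, for generic `c`.* If the upper bound fails, then `c ∈ W(w,p)` for some `w < w₀`,
hence `c` satisfies the weaker condition `ScaleBounded`, which is Borel, is increasing in `w`, and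
defines a linear subspace. The exceptional set is therefore contained in a countable union of Borel
linear subspaces. If some `g ∈ b^{s,∞}_r` belongs to none of them, every line of direction `g` meets
each of them, and each of their translates, in at most one point (`ScaleBounded.direction`), so the
uniform measure on the segment `{t g : 0 ≤ t ≤ 1}` witnesses Haar-nullity
(`isHaarNull_scaleBounded`). Such a `g` is `denseSeq`, with all coefficients of a scale equal, in the
dense regime, and `sparseSeq`, with one nonzero coefficient per scale, in the sparse one.
-/

open MeasureTheory
open scoped ENNReal BigOperators

/-- The space of wavelet-type coefficient sequences `c = (c_{j,k})`, `j ∈ ℕ`,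
`k ∈ {0,…,2^j−1}^d`. -/
abbrev BSeq (d : ℕ) := (j : ℕ) → (Fin d → Fin (2 ^ j)) → ℝ

/-- The `j`-th term `2^{(s−d/r+d/2)j} (Σ_k |c_{j,k}|^r)^{1/r}` of the Besov quasi-norm. -/
noncomputable def besovNormAt (d : ℕ) (s r : ℝ) (c : BSeq d) (j : ℕ) : ℝ :=
  (2 : ℝ) ^ ((s - (d : ℝ) / r + (d : ℝ) / 2) * (j : ℝ)) *
    (∑ k : Fin d → Fin (2 ^ j), |c j k| ^ r) ^ (1 / r)

/-- Membership in the Besov sequence space `b^{s,∞}_r`: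
`sup_j 2^{(s−d/r+d/2)j} (Σ_k |c_{j,k}|^r)^{1/r} < ∞`. -/
def MemBesov (d : ℕ) (s r : ℝ) (c : BSeq d) : Prop :=
  ∃ C : ℝ, ∀ j : ℕ, besovNormAt d s r c j ≤ C

/-- The weak Besov quasi-norm
`‖c‖_{W(w,p)} = sup_{λ>0} λ^w Σ_{j≥0} 2^{j(dp/2−d)} #{k : |c_{j,k}| > λ}`, valued in `[0,∞]`. -/
noncomputable def wBesovNorm (d : ℕ) (w p : ℝ) (c : BSeq d) : ℝ≥0∞ :=
  ⨆ lam : Set.Ioi (0 : ℝ),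
    ENNReal.ofReal ((lam : ℝ) ^ w) *
      ∑' j : ℕ, ENNReal.ofReal ((2 : ℝ) ^ (((d : ℝ) * p / 2 - (d : ℝ)) * (j : ℝ))) *
        (Nat.card {k : Fin d → Fin (2 ^ j) // (lam : ℝ) < |c j k|} : ℝ≥0∞)

/-- Membership in the weak Besov sequence space `W(w,p)`. -/
def MemWBesov (d : ℕ) (w p : ℝ) (c : BSeq d) : Prop :=
  wBesovNorm d w p c ≠ ⊤

/-- The Besov sequence space `b^{s,∞}_r` as a type. -/
def BesovSp (d : ℕ) (s r : ℝ) := {c : BSeq d // MemBesov d s r c}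

/-- The extended distance on sequences associated with the Besov quasi-norm. -/
noncomputable def besovEDist (d : ℕ) (s r : ℝ) (c c' : BSeq d) : ℝ≥0∞ :=
  ⨆ j : ℕ, ENNReal.ofReal (besovNormAt d s r (c - c') j)

/-- A set `S ⊆ b^{s,∞}_r` is Haar-null (relative to a topology `τ` on `b^{s,∞}_r`) if it is
contained in a Borel set `A` carrying a compactly supported Borel probability measure `μ`
all of whose translates of `A` are null. -/
def IsHaarNullBesov (d : ℕ) (s r : ℝ) (τ : TopologicalSpace (BesovSp d s r))
    (S : Set (BesovSp d s r)) : Prop :=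
  ∃ A : Set (BesovSp d s r), S ⊆ A ∧ MeasurableSet[@borel _ τ] A ∧
    ∃ μ : @Measure (BesovSp d s r) (@borel _ τ),
      @IsProbabilityMeasure _ (@borel _ τ) μ ∧
      (∃ K : Set (BesovSp d s r), @IsCompact _ τ K ∧ μ Kᶜ = 0) ∧
      ∀ x : BesovSp d s r, μ {y : BesovSp d s r | ∃ a ∈ A, y.1 = x.1 + a.1} = 0

/-- `τ` is the quasi-norm topology of `b^{s,∞}_r`: around every point, the balls of
`besovEDist` form a basis of neighbourhoods. -/
def IsBesovTopology (d : ℕ) (s r : ℝ) (τ : TopologicalSpace (BesovSp d s r)) : Prop :=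
  ∀ x : BesovSp d s r, (@nhds _ τ x).HasBasis (fun ε : ℝ≥0∞ => 0 < ε)
    (fun ε => {y : BesovSp d s r | besovEDist d s r x.1 y.1 < ε})

/-- The minimax exponent `α̃`. -/
noncomputable def alphaTilde (d : ℕ) (s r p : ℝ) : ℝ :=
  if p * (d : ℝ) / (2 * s + (d : ℝ)) < r then 2 * s / (2 * s + (d : ℝ))
  else 2 * (s - (d : ℝ) / r + (d : ℝ) / p) / (2 * (s - (d : ℝ) / r) + (d : ℝ))

/-- The irreducibility index `J(j,k)`: the smallest `J` such that `k = 2^{j−J} K` for some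
`K ∈ {0,…,2^J−1}^d`, i.e. the smallest `J` with `2^{j−J} ∣ k_i` for all `i`. -/
def irredIndex (d : ℕ) (j : ℕ) (k : Fin d → Fin (2 ^ j)) : ℕ :=
  Nat.find (p := fun J : ℕ => ∀ i : Fin d, 2 ^ (j - J) ∣ (k i : ℕ)) ⟨j, fun i => by simp⟩

/-- The saturating sequence `g`, with `g_{j,k} = j^{−(1+3/r)} 2^{−(s−d/r+d/2)j} 2^{−(d/r)J(j,k)}`
for `j ≥ 1` and `g_{0,k} = 0`. -/
noncomputable def gSeq (d : ℕ) (s r : ℝ) : BSeq d := fun j k =>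
  if j = 0 then 0
  else (j : ℝ) ^ (-(1 + 3 / r)) * (2 : ℝ) ^ (-(s - (d : ℝ) / r + (d : ℝ) / 2) * (j : ℝ)) *
    (2 : ℝ) ^ (-((d : ℝ) / r) * (irredIndex d j k : ℝ))

/-! ### Every Besov sequence lies in `W(w,p)` just above the critical exponent -/

/-- By Chebyshev's inequality, `λ^w #{k : |c_{j,k}| > λ} ≤ Σ_k |c_{j,k}|^w`, so geometric decay of
the weighted sums `Σ_k |c_{j,k}|^w` gives `c ∈ W(w,p)`. -/
lemma memWBesov_of_sum_le {d : ℕ} {w p D e : ℝ} {c : BSeq d} (hw : 0 < w) (he : e < 0)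
    (h : ∀ j : ℕ, (2 : ℝ) ^ (((d : ℝ) * p / 2 - (d : ℝ)) * (j : ℝ)) * ∑ k, |c j k| ^ w
      ≤ D * (2 : ℝ) ^ (e * (j : ℝ))) :
    MemWBesov d w p c := by
  have hsum : Summable (fun j : ℕ => D * (2 : ℝ) ^ (e * (j : ℝ))) := by
    apply Summable.mul_left
    have : (fun j : ℕ => (2 : ℝ) ^ (e * (j : ℝ))) = fun j : ℕ => ((2 : ℝ) ^ e) ^ j := by
      ext j; rw [Real.rpow_mul (by norm_num), Real.rpow_natCast]
    rw [this]
    exact summable_geometric_of_lt_one (by positivity)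
      (Real.rpow_lt_one_of_one_lt_of_neg (by norm_num) he)
  refine ne_top_of_le_ne_top (hsum.tsum_ofReal_ne_top) ?_
  refine iSup_le fun lam => ?_
  obtain ⟨lam, hl⟩ := lam
  have hl : 0 < lam := hl
  rw [← ENNReal.tsum_mul_left]
  refine ENNReal.tsum_le_tsum fun j => ?_
  have key : lam ^ w * (Nat.card {k : Fin d → Fin (2 ^ j) // lam < |c j k|} : ℝ)
      ≤ ∑ k, |c j k| ^ w := by
    classical
    rw [Nat.card_eq_fintype_card, Fintype.card_subtype, mul_comm, ← nsmul_eq_mul]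
    refine (Finset.card_nsmul_le_sum _ (fun k => |c j k| ^ w) _ fun k hk => ?_).trans
      (Finset.sum_le_univ_sum_of_nonneg fun k => by positivity)
    exact Real.rpow_le_rpow hl.le (Finset.mem_filter.1 hk).2.le hw.le
  rw [← ENNReal.ofReal_natCast, ← ENNReal.ofReal_mul (by positivity),
    ← ENNReal.ofReal_mul (by positivity)]
  refine ENNReal.ofReal_le_ofReal (le_trans ?_ (h j))
  calc _ = (2 : ℝ) ^ (((d : ℝ) * p / 2 - (d : ℝ)) * (j : ℝ)) *
        (lam ^ w * (Nat.card {k : Fin d → Fin (2 ^ j) // lam < |c j k|} : ℝ)) := by ring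
    _ ≤ _ := by gcongr

/-- The Besov bound, raised to an arbitrary power `w`. -/
lemma MemBesov.exists_sum_le {d : ℕ} {s r : ℝ} {c : BSeq d} (hc : MemBesov d s r c) :
    ∃ C : ℝ, 0 ≤ C ∧ ∀ (j : ℕ) (w : ℝ), 0 ≤ w → (∑ k, |c j k| ^ r) ^ (w / r) ≤
      C ^ w * (2 : ℝ) ^ (-(s - (d : ℝ) / r + (d : ℝ) / 2) * w * (j : ℝ)) := by
  obtain ⟨C, hC⟩ := hc
  have hC0 : 0 ≤ C := le_trans (by unfold besovNormAt; positivity) (hC 0)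
  refine ⟨C, hC0, fun j w hw => ?_⟩
  have h := hC j
  unfold besovNormAt at h
  set θ := s - (d : ℝ) / r + (d : ℝ) / 2
  have h1 : (∑ k, |c j k| ^ r) ^ (1 / r) ≤ C * (2 : ℝ) ^ (-θ * (j : ℝ)) := by
    rw [neg_mul, Real.rpow_neg (by norm_num), ← div_eq_mul_inv, le_div_iff₀ (by positivity)]
    linarith
  have h2 := Real.rpow_le_rpow (by positivity) h1 hw
  rw [← Real.rpow_mul (by positivity), Real.mul_rpow hC0 (by positivity),
    ← Real.rpow_mul (by norm_num)] at h2
  convert h2 using 3 <;> ring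

/-- The embedding `ℓ^r ⊆ ℓ^w` for `r ≤ w`. -/
lemma sum_rpow_le_of_le {ι : Type*} [Fintype ι] {a : ι → ℝ} (ha : ∀ i, 0 ≤ a i) {r w : ℝ}
    (hr : 0 < r) (hrw : r ≤ w) : ∑ i, a i ^ w ≤ (∑ i, a i ^ r) ^ (w / r) := by
  set S := ∑ i, a i ^ r with hS
  have hS0 : 0 ≤ S := Finset.sum_nonneg fun i _ => Real.rpow_nonneg (ha i) _
  have h1r : 1 ≤ w / r := (one_le_div hr).2 hrw
  calc ∑ i, a i ^ w ≤ ∑ i, a i ^ r * S ^ (w / r - 1) := by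
        refine Finset.sum_le_sum fun i _ => ?_
        have h1 : a i ^ r ≤ S :=
          Finset.single_le_sum (f := fun i => a i ^ r)
            (fun i _ => Real.rpow_nonneg (ha i) _) (Finset.mem_univ i)
        have h2 : a i ^ w = a i ^ r * (a i ^ r) ^ (w / r - 1) := by
          rw [← Real.rpow_mul (ha i), ← Real.rpow_add_of_nonneg (ha i) hr.le]
          · congr 1; field_simp; ring
          · exact mul_nonneg hr.le (by linarith)
        rw [h2]
        exact mul_le_mul_of_nonneg_left
          (Real.rpow_le_rpow (Real.rpow_nonneg (ha i) _) h1 (by linarith))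
          (Real.rpow_nonneg (ha i) _)
    _ = S ^ (1 : ℝ) * S ^ (w / r - 1) := by rw [← Finset.sum_mul, Real.rpow_one]
    _ = S ^ (w / r) := by
        rw [← Real.rpow_add_of_nonneg hS0 (by norm_num) (by linarith)]; congr 1; ring

/-- Comparison of power means for `w ≤ r`. -/
lemma sum_rpow_le_of_ge {ι : Type*} [Fintype ι] {a : ι → ℝ} (ha : ∀ i, 0 ≤ a i) {r w : ℝ}
    (hw : 0 < w) (hrw : w ≤ r) :
    ∑ i, a i ^ w ≤ (Fintype.card ι : ℝ) ^ (1 - w / r) * (∑ i, a i ^ r) ^ (w / r) := by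
  have hr : 0 < r := hw.trans_le hrw
  have h := Real.rpow_sum_le_const_mul_sum_rpow Finset.univ (fun i => a i ^ w)
    ((one_le_div hw).2 hrw)
  have e : ∀ i, |a i ^ w| = a i ^ w := fun i => abs_of_nonneg (Real.rpow_nonneg (ha i) _)
  have e2 : ∀ i, (a i ^ w) ^ (r / w) = a i ^ r := fun i => by
    rw [← Real.rpow_mul (ha i)]; congr 1; field_simp
  simp only [e, e2] at h
  have hS : 0 ≤ ∑ i, a i ^ w := Finset.sum_nonneg fun i _ => Real.rpow_nonneg (ha i) _
  have hT : 0 ≤ ∑ i, a i ^ r := Finset.sum_nonneg fun i _ => Real.rpow_nonneg (ha i) _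
  have h2 := Real.rpow_le_rpow (by positivity) h (show 0 ≤ w / r by positivity)
  rw [Real.mul_rpow (by positivity) hT, ← Real.rpow_mul hS, ← Real.rpow_mul (by positivity)] at h2
  convert h2 using 2
  · rw [show r / w * (w / r) = 1 by field_simp, Real.rpow_one]
  · rw [Finset.card_univ]; congr 1; field_simp

lemma card_fin_fun (d j : ℕ) :
    (Fintype.card (Fin d → Fin (2 ^ j)) : ℝ) = (2 : ℝ) ^ ((d : ℝ) * (j : ℝ)) := by
  simp only [Fintype.card_fun, Fintype.card_fin]
  push_cast
  rw [← pow_mul, ← Real.rpow_natCast]; push_cast; ring_nf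

/-- Above the exponent `r`, the embedding `ℓ^r ⊆ ℓ^w` at each scale controls `Σ_k |c_{j,k}|^w`. -/
lemma memWBesov_sparse {d : ℕ} {s r p w : ℝ} {c : BSeq d} (hc : MemBesov d s r c) (hr : 0 < r)
    (hrw : r ≤ w)
    (he : (d : ℝ) * p / 2 - d - w * (s - (d : ℝ) / r + (d : ℝ) / 2) < 0) :
    MemWBesov d w p c := by
  obtain ⟨C, hC, h⟩ := hc.exists_sum_le
  refine memWBesov_of_sum_le (D := C ^ w) (hr.trans_le hrw) he fun j => ?_
  have h1 := (sum_rpow_le_of_le (a := fun k => |c j k|) (fun k => abs_nonneg _) hr hrw).trans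
    (h j w (hr.le.trans hrw))
  refine (mul_le_mul_of_nonneg_left h1 (by positivity)).trans (le_of_eq ?_)
  rw [mul_left_comm, ← Real.rpow_add (by norm_num)]
  congr 2; ring

/-- Below the exponent `r`, Hölder's inequality at each scale controls `Σ_k |c_{j,k}|^w`. -/
lemma memWBesov_dense {d : ℕ} {s r p w : ℝ} {c : BSeq d} (hc : MemBesov d s r c) (hw : 0 < w)
    (hrw : w ≤ r) (he : (d : ℝ) * p / 2 - w * (s + (d : ℝ) / 2) < 0) :
    MemWBesov d w p c := by
  obtain ⟨C, hC, h⟩ := hc.exists_sum_le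
  refine memWBesov_of_sum_le (D := C ^ w) hw he fun j => ?_
  have h1 := (sum_rpow_le_of_ge (a := fun k => |c j k|) (fun k => abs_nonneg _) hw hrw).trans
    (mul_le_mul_of_nonneg_left (h j w hw.le) (by positivity))
  refine (mul_le_mul_of_nonneg_left h1 (by positivity)).trans (le_of_eq ?_)
  rw [card_fin_fun, ← Real.rpow_mul (by norm_num), mul_left_comm (_ ^ _) (C ^ w), mul_left_comm,
    ← Real.rpow_add (by norm_num), ← Real.rpow_add (by norm_num)]
  congr 2
  have := (hw.trans_le hrw).ne'
  field_simp; ring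

/-! ### A Borel linear condition weaker than membership in `W(w,p)` -/

/-- A weakening of `c ∈ W(w,p)`: the bound on `λ^w 2^{j(dp/2−d)} #{k : |c_{j,k}| > λ}` is asked for
one scale `j` at a time (no sum over `j`) and only for the thresholds `λ = 2^{-(i+βj)}`, `i ∈ ℕ`.
Being given by countably many conditions on finitely many coordinates each, it is a Borel
condition. -/
def ScaleBounded (d : ℕ) (β p w : ℝ) (c : BSeq d) : Prop :=
  ∃ N : ℕ, ∀ i j : ℕ, (2 : ℝ) ^ (-((i : ℝ) + β * j) * w) *
    (2 : ℝ) ^ (((d : ℝ) * p / 2 - (d : ℝ)) * (j : ℝ)) *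
      (Nat.card {k : Fin d → Fin (2 ^ j) // (2 : ℝ) ^ (-((i : ℝ) + β * j)) < |c j k|} : ℝ) ≤ N

lemma MemWBesov.scaleBounded {d : ℕ} {w p : ℝ} {c : BSeq d} (β : ℝ) (h : MemWBesov d w p c) :
    ScaleBounded d β p w c := by
  obtain ⟨N, hN⟩ := exists_nat_ge (wBesovNorm d w p c).toReal
  refine ⟨N, fun i j => le_trans ?_ hN⟩
  rw [← ENNReal.ofReal_le_iff_le_toReal h]
  have hl : (0 : ℝ) < (2 : ℝ) ^ (-((i : ℝ) + β * j)) := by positivity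
  refine le_trans ?_ (le_iSup _ (⟨_, hl⟩ : Set.Ioi (0 : ℝ)))
  rw [mul_assoc, ENNReal.ofReal_mul (by positivity), Real.rpow_mul (by norm_num)]
  gcongr
  refine le_trans ?_ (ENNReal.le_tsum j)
  rw [ENNReal.ofReal_mul (by positivity), ENNReal.ofReal_natCast]

/-- Monotonicity in the exponent, because all thresholds `2^{-(i+βj)}` are at most one. -/
lemma ScaleBounded.mono {d : ℕ} {β p w w' : ℝ} {c : BSeq d} (hβ : 0 ≤ β) (hw : w ≤ w')
    (h : ScaleBounded d β p w c) : ScaleBounded d β p w' c := by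
  obtain ⟨N, hN⟩ := h
  refine ⟨N, fun i j => le_trans ?_ (hN i j)⟩
  have : 0 ≤ (i : ℝ) + β * j := by positivity
  have h2 : (2 : ℝ) ^ (-((i : ℝ) + β * j) * w') ≤ (2 : ℝ) ^ (-((i : ℝ) + β * j) * w) :=
    Real.rpow_le_rpow_of_exponent_le (by norm_num) (by nlinarith)
  gcongr

/-- The sequences satisfying `ScaleBounded` are stable under differences and scaling: if two
points of a line of direction `g` satisfy it, so does `g`. -/
lemma ScaleBounded.direction {d : ℕ} {β p w t : ℝ} {a b g : BSeq d} (ht : t ≠ 0)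
    (hg : ∀ j k, a j k - b j k = t * g j k)
    (ha : ScaleBounded d β p w a) (hb : ScaleBounded d β p w b) : ScaleBounded d β p w g := by
  obtain ⟨N, hN⟩ := ha
  obtain ⟨M, hM⟩ := hb
  obtain ⟨q, hq⟩ := exists_pow_lt_of_lt_one (abs_pos.2 ht) (show (1 / 2 : ℝ) < 1 by norm_num)
  have hq' : (2 : ℝ) ^ (-(q : ℝ)) < |t| := by
    rwa [Real.rpow_neg (by norm_num), Real.rpow_natCast, ← inv_pow, ← one_div]
  obtain ⟨L, hL⟩ := exists_nat_ge ((2 : ℝ) ^ (((q : ℝ) + 1) * w) * (N + M))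
  refine ⟨L, fun i j => le_trans ?_ hL⟩
  have hN := hN (i + q + 1) j
  have hM := hM (i + q + 1) j
  push_cast at hN hM
  set l' : ℝ := (2 : ℝ) ^ (-((i : ℝ) + q + 1 + β * j)) with hl'
  have hl : (2 : ℝ) ^ (-((i : ℝ) + β * j)) * (2 : ℝ) ^ (-(q : ℝ)) = 2 * l' := by
    nth_rewrite 3 [← Real.rpow_one 2]
    rw [hl', ← Real.rpow_add (by norm_num), ← Real.rpow_add (by norm_num)]
    congr 1; ring
  have hcard : (Nat.card {k : Fin d → Fin (2 ^ j) // (2 : ℝ) ^ (-((i : ℝ) + β * j)) < |g j k|} : ℝ)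
      ≤ Nat.card {k : Fin d → Fin (2 ^ j) // l' < |a j k|} +
        Nat.card {k : Fin d → Fin (2 ^ j) // l' < |b j k|} := by
    classical
    simp only [Nat.card_eq_fintype_card, Fintype.card_subtype]
    norm_cast
    refine (Finset.card_le_card ?_).trans (Finset.card_union_le _ _)
    intro k hk
    simp only [Finset.mem_filter, Finset.mem_univ, true_and, Finset.mem_union] at hk ⊢
    by_contra! hcon
    have h1 : (2 : ℝ) ^ (-((i : ℝ) + β * j)) * (2 : ℝ) ^ (-(q : ℝ)) < |g j k| * |t| := by
      gcongr
    have h2 : |t * g j k| ≤ |a j k| + |b j k| := by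
      rw [← hg]; exact abs_sub _ _
    rw [abs_mul] at h2
    rw [hl] at h1
    linarith [hcon.1, hcon.2]
  have hw : (2 : ℝ) ^ (-((i : ℝ) + β * j) * w) =
      (2 : ℝ) ^ (((q : ℝ) + 1) * w) * (2 : ℝ) ^ (-((i : ℝ) + q + 1 + β * j) * w) := by
    rw [← Real.rpow_add (by norm_num)]; congr 1; ring
  rw [hw, mul_assoc, mul_assoc]
  refine mul_le_mul_of_nonneg_left ?_ (by positivity)
  rw [← mul_assoc]
  refine (mul_le_mul_of_nonneg_left hcard (by positivity)).trans ?_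
  rw [mul_add]
  exact add_le_add hN hM

lemma measurableSet_scaleBounded {X : Type*} [MeasurableSpace X] {d : ℕ} (β p w : ℝ)
    {f : X → BSeq d} (hf : ∀ j k, Measurable fun x => f x j k) :
    MeasurableSet {x | ScaleBounded d β p w (f x)} := by
  classical
  simp only [ScaleBounded, Set.ofPred_exists, Set.ofPred_forall]
  refine MeasurableSet.iUnion fun N => MeasurableSet.iInter fun i => MeasurableSet.iInter fun j => ?_
  refine measurableSet_le (Measurable.const_mul ?_ _) measurable_const
  have : ∀ x, (Nat.card {k : Fin d → Fin (2 ^ j) // (2 : ℝ) ^ (-((i : ℝ) + β * j)) < |f x j k|} : ℝ)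
      = ∑ k : Fin d → Fin (2 ^ j),
        if (2 : ℝ) ^ (-((i : ℝ) + β * j)) < |f x j k| then (1 : ℝ) else 0 := by
    intro x
    rw [Nat.card_eq_fintype_card, Fintype.card_subtype]; simp
  simp only [this]
  refine Finset.measurable_sum _ fun k _ => Measurable.ite ?_ measurable_const measurable_const
  exact measurableSet_lt measurable_const (measurable_norm.comp (hf j k))

/-- If the number of coefficients of `g` of size at least `2^{-βj}` at scale `j` makes the quantity
bounded in `ScaleBounded` grow geometrically in `j`, then `g` is not `ScaleBounded`. -/
lemma not_scaleBounded {d : ℕ} {β p w e : ℝ} {g : BSeq d} (he : 0 < e)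
    (hg : ∀ j : ℕ, (2 : ℝ) ^ (e * j) ≤ (2 : ℝ) ^ (-(β * j) * w) *
      (2 : ℝ) ^ (((d : ℝ) * p / 2 - (d : ℝ)) * (j : ℝ)) *
        (Nat.card {k : Fin d → Fin (2 ^ j) // (2 : ℝ) ^ (-(β * j)) ≤ |g j k|} : ℝ)) :
    ¬ ScaleBounded d β p w g := by
  rintro ⟨N, hN⟩
  -- The threshold index `i = 1` puts the coefficients of size `2^{-βj}` strictly above the threshold.
  obtain ⟨j, hj⟩ := pow_unbounded_of_one_lt (N * (2 : ℝ) ^ w)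
    (Real.one_lt_rpow (show (1 : ℝ) < 2 by norm_num) he)
  rw [← Real.rpow_natCast, ← Real.rpow_mul (by norm_num)] at hj
  have h1 := hN 1 j
  have hcard : (Nat.card {k : Fin d → Fin (2 ^ j) // (2 : ℝ) ^ (-(β * j)) ≤ |g j k|} : ℝ) ≤
      Nat.card {k : Fin d → Fin (2 ^ j) // (2 : ℝ) ^ (-(((1 : ℕ) : ℝ) + β * j)) < |g j k|} := by
    classical
    rw [Nat.card_eq_fintype_card, Nat.card_eq_fintype_card]
    refine Nat.cast_le.2 (Fintype.card_subtype_mono _ _ fun k hk => lt_of_lt_of_le ?_ hk)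
    exact Real.rpow_lt_rpow_of_exponent_lt (by norm_num) (by push_cast; linarith)
  have hw : (2 : ℝ) ^ (-(β * j) * w) =
      (2 : ℝ) ^ w * (2 : ℝ) ^ (-(((1 : ℕ) : ℝ) + β * j) * w) := by
    rw [← Real.rpow_add (by norm_num)]; congr 1; push_cast; ring
  have h2 := (hg j).trans (mul_le_mul_of_nonneg_left hcard (by positivity))
  rw [hw, mul_assoc, mul_assoc] at h2
  rw [mul_assoc] at h1
  have h3 := mul_le_mul_of_nonneg_left h1 (show 0 ≤ (2 : ℝ) ^ w by positivity)
  linarith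

/-! ### Lines in the Besov space as probes -/

lemma IsBesovTopology.continuous_coord {d : ℕ} {s r : ℝ} (hr : 0 < r)
    {τ : TopologicalSpace (BesovSp d s r)} (hτ : IsBesovTopology d s r τ) (j : ℕ)
    (k : Fin d → Fin (2 ^ j)) : Continuous fun c : BesovSp d s r => c.1 j k := by
  rw [continuous_iff_continuousAt]
  intro x
  set A : ℝ := (2 : ℝ) ^ ((s - (d : ℝ) / r + (d : ℝ) / 2) * (j : ℝ)) with hA
  have hA0 : 0 < A := by positivity
  refine ((hτ x).tendsto_iff Metric.nhds_basis_ball).2 fun ε hε =>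
    ⟨ENNReal.ofReal (A * ε), ENNReal.ofReal_pos.2 (by positivity), fun y hy => ?_⟩
  have h1 : ENNReal.ofReal (besovNormAt d s r (x.1 - y.1) j) < ENNReal.ofReal (A * ε) :=
    (le_iSup (fun j => ENNReal.ofReal (besovNormAt d s r (x.1 - y.1) j)) j).trans_lt hy
  have h2 := (ENNReal.ofReal_lt_ofReal_iff (by positivity)).1 h1
  have h3 := lt_of_mul_lt_mul_left h2 hA0.le
  rw [Metric.mem_ball, dist_comm, Real.dist_eq]
  refine lt_of_le_of_lt ?_ h3
  have h4 : |x.1 j k - y.1 j k| ^ r ≤ ∑ k, |(x.1 - y.1) j k| ^ r :=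
    Finset.single_le_sum (f := fun k => |(x.1 - y.1) j k| ^ r)
      (fun k _ => by positivity) (Finset.mem_univ k)
  have h5 := Real.rpow_le_rpow (by positivity) h4 (show 0 ≤ 1 / r by positivity)
  rwa [← Real.rpow_mul (abs_nonneg _), mul_one_div_cancel hr.ne', Real.rpow_one] at h5

lemma besovNormAt_smul {d : ℕ} {s r : ℝ} (hr : 0 < r) (t : ℝ) (g : BSeq d) (j : ℕ) :
    besovNormAt d s r (t • g) j = |t| * besovNormAt d s r g j := by
  unfold besovNormAt
  have : ∀ k, |(t • g) j k| ^ r = |t| ^ r * |g j k| ^ r := fun k => by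
    rw [← Real.mul_rpow (abs_nonneg _) (abs_nonneg _), ← abs_mul]; rfl
  simp only [this]
  rw [← Finset.mul_sum, Real.mul_rpow (by positivity) (by positivity),
    ← Real.rpow_mul (abs_nonneg _), mul_one_div_cancel hr.ne', Real.rpow_one]
  ring

lemma MemBesov.smul {d : ℕ} {s r : ℝ} (hr : 0 < r) {g : BSeq d} (hg : MemBesov d s r g) (t : ℝ) :
    MemBesov d s r (t • g) := by
  obtain ⟨C, hC⟩ := hg
  exact ⟨|t| * C, fun j => by
    rw [besovNormAt_smul hr]; exact mul_le_mul_of_nonneg_left (hC j) (abs_nonneg _)⟩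

/-- The line `t ↦ t g` in `b^{s,∞}_r`. -/
def besovLine {d : ℕ} {s r : ℝ} (hr : 0 < r) {g : BSeq d} (hg : MemBesov d s r g) (t : ℝ) :
    BesovSp d s r := ⟨t • g, hg.smul hr t⟩

lemma continuous_besovLine {d : ℕ} {s r : ℝ} (hr : 0 < r) {g : BSeq d} (hg : MemBesov d s r g)
    {τ : TopologicalSpace (BesovSp d s r)} (hτ : IsBesovTopology d s r τ) :
    Continuous (besovLine hr hg) := by
  rw [continuous_iff_continuousAt]
  intro t
  obtain ⟨C, hC⟩ := id hg
  have hC0 : 0 ≤ C := le_trans (by unfold besovNormAt; positivity) (hC 0)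
  refine (hτ _).tendsto_right_iff.2 fun ε hε => ?_
  have hlim : Filter.Tendsto (fun u : ℝ => ENNReal.ofReal (|t - u| * C)) (nhds t) (nhds 0) := by
    have : Continuous fun u : ℝ => ENNReal.ofReal (|t - u| * C) :=
      ENNReal.continuous_ofReal.comp (by fun_prop)
    simpa using this.tendsto t
  filter_upwards [hlim.eventually_lt_const hε] with u hu
  refine lt_of_le_of_lt (iSup_le fun j => ?_) hu
  have : (besovLine hr hg t).1 - (besovLine hr hg u).1 = (t - u) • g := (sub_smul t u g).symm
  rw [this, besovNormAt_smul hr]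
  exact ENNReal.ofReal_le_ofReal (mul_le_mul_of_nonneg_left (hC j) (abs_nonneg _))

/-- If the direction `g` fails `ScaleBounded` for every exponent below `w₀`, then the set of `c`
satisfying it for some exponent below `w₀` is Haar-null: a line of direction `g` meets each of
countably many subsets exhausting it in at most one point. -/
lemma isHaarNull_scaleBounded {d : ℕ} {s r β p w₀ : ℝ} (hr : 0 < r) (hβ : 0 ≤ β)
    {τ : TopologicalSpace (BesovSp d s r)} (hτ : IsBesovTopology d s r τ)
    {g : BSeq d} (hg : MemBesov d s r g) (hgn : ∀ w < w₀, ¬ ScaleBounded d β p w g)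
    {S : Set (BesovSp d s r)} (hS : ∀ c ∈ S, ∃ w < w₀, ScaleBounded d β p w c.1) :
    IsHaarNullBesov d s r τ S := by
  let _ : MeasurableSpace (BesovSp d s r) := @borel _ τ
  have : BorelSpace (BesovSp d s r) := ⟨rfl⟩
  have hcoord : ∀ j k, Measurable fun c : BesovSp d s r => c.1 j k :=
    fun j k => (hτ.continuous_coord hr j k).measurable
  have hline := continuous_besovLine hr hg hτ
  let u : ℕ → ℝ := fun n => w₀ - 1 / ((n : ℝ) + 1)
  have hu : ∀ n, u n < w₀ := fun n => sub_lt_self _ (by positivity)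
  refine ⟨⋃ n, {c | ScaleBounded d β p (u n) c.1}, ?_, ?_, ?_⟩
  · intro c hc
    obtain ⟨w, hw, h⟩ := hS c hc
    obtain ⟨n, hn⟩ := exists_nat_one_div_lt (sub_pos.2 hw)
    exact Set.mem_iUnion.2 ⟨n, h.mono hβ (by simp only [u]; linarith)⟩
  · exact MeasurableSet.iUnion fun n => measurableSet_scaleBounded _ _ _ hcoord
  refine ⟨(volume.restrict (Set.Icc (0 : ℝ) 1)).map (besovLine hr hg), ?_,
    ⟨besovLine hr hg '' Set.Icc 0 1, isCompact_Icc.image hline, ?_⟩, fun x => ?_⟩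
  · have : IsProbabilityMeasure (volume.restrict (Set.Icc (0 : ℝ) 1)) := ⟨by simp⟩
    exact Measure.isProbabilityMeasure_map hline.measurable.aemeasurable
  · -- The coordinates separate points, so the compact segment is closed, hence Borel.
    have : T2Space (BesovSp d s r) := T2Space.of_injective_continuous
      (f := fun c : BesovSp d s r => (c.1 : BSeq d)) Subtype.val_injective
      (continuous_pi fun j => continuous_pi fun k => hτ.continuous_coord hr j k)
    have hK : IsCompact (besovLine hr hg '' Set.Icc 0 1) := isCompact_Icc.image hline
    rw [Measure.map_apply hline.measurable hK.measurableSet.compl,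
      Measure.restrict_apply (hline.measurable hK.measurableSet.compl)]
    refine measure_mono_null (t := ∅) ?_ measure_empty
    rintro t ⟨ht, ht'⟩
    exact ht ⟨t, ht', rfl⟩
  · -- Working with `y - x` as a bare sequence avoids the triangle inequality in `b^{s,∞}_r`.
    have hmeas : ∀ n, MeasurableSet {y : BesovSp d s r | ScaleBounded d β p (u n) (y.1 - x.1)} :=
      fun n => measurableSet_scaleBounded _ _ _ fun j k => (hcoord j k).sub_const (x.1 j k)
    refine measure_mono_null (t := ⋃ n, {y | ScaleBounded d β p (u n) (y.1 - x.1)}) ?_ ?_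
    · rintro y ⟨a, ha, hy⟩
      obtain ⟨n, hn⟩ := Set.mem_iUnion.1 ha
      refine Set.mem_iUnion.2 ⟨n, ?_⟩
      simpa [hy] using hn
    · refine measure_iUnion_null fun n => ?_
      rw [Measure.map_apply hline.measurable (hmeas n)]
      refine Set.Subsingleton.measure_zero ?_ _
      intro t ht t' ht'
      by_contra hne
      refine hgn _ (hu n) (ScaleBounded.direction (sub_ne_zero.2 hne) (fun j k => ?_) ht ht')
      simp only [besovLine, Pi.sub_apply, Pi.smul_apply, smul_eq_mul]
      ring

/-- Reduction of the theorem to a critical exponent `w₀ = (1 - α̃)p`: all of `b^{s,∞}_r` lies in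
`W(w,p)` for `w` slightly above `w₀`, and one sequence of `b^{s,∞}_r` fails `ScaleBounded` for
every exponent below `w₀`. -/
lemma isHaarNull_of_critical {d : ℕ} {s r β p w₀ w₁ : ℝ} (hr : 0 < r) (hβ : 0 ≤ β) (hp : 0 < p)
    {τ : TopologicalSpace (BesovSp d s r)} (hτ : IsBesovTopology d s r τ)
    (hw₀ : 0 < w₀) (hw₀p : w₀ < p) (hw₁ : w₀ < w₁)
    (hmem : ∀ c : BSeq d, MemBesov d s r c → ∀ w, w₀ < w → w < w₁ → MemWBesov d w p c)
    {g : BSeq d} (hg : MemBesov d s r g) (hgn : ∀ w < w₀, ¬ ScaleBounded d β p w g) :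
    IsHaarNullBesov d s r τ
      {c : BesovSp d s r |
        sSup {α : ℝ | α ∈ Set.Ioo (0 : ℝ) 1 ∧ MemWBesov d ((1 - α) * p) p c.1} ≠ 1 - w₀ / p} := by
  refine isHaarNull_scaleBounded hr hβ hτ hg hgn fun c hc => ?_
  by_contra! hcon
  refine hc ?_
  have hub : ∀ α ∈ {α : ℝ | α ∈ Set.Ioo (0 : ℝ) 1 ∧ MemWBesov d ((1 - α) * p) p c.1},
      α ≤ 1 - w₀ / p := by
    rintro α ⟨-, hα⟩
    by_contra! hlt
    refine hcon _ ?_ (hα.scaleBounded β)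
    rw [← lt_div_iff₀ hp]; linarith
  -- For `b < 1 - w₀/p`, an `α` between `b` and `1 - w₀/p` whose exponent lies in `(w₀, w₁)`.
  have hlow : ∀ b < 1 - w₀ / p,
      ∃ α ∈ {α : ℝ | α ∈ Set.Ioo (0 : ℝ) 1 ∧ MemWBesov d ((1 - α) * p) p c.1}, b < α := by
    intro b hb
    have h0 : 0 < w₀ / p := by positivity
    have h1 : w₀ / p < 1 := (div_lt_one hp).2 hw₀p
    have h2 : w₀ / p < w₁ / p := div_lt_div_of_pos_right hw₁ hp
    obtain ⟨α, hα, hα'⟩ := exists_between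
      (show max b (max 0 (1 - w₁ / p)) < 1 - w₀ / p from
        max_lt hb (max_lt (by linarith) (by linarith)))
    simp only [max_lt_iff] at hα
    refine ⟨α, ⟨⟨hα.2.1, by linarith⟩, hmem _ c.2 _ ?_ ?_⟩, hα.1⟩
    · rw [← div_lt_iff₀ hp]; linarith
    · rw [← lt_div_iff₀ hp]; linarith [hα.2.2]
  obtain ⟨α, hα, -⟩ := hlow (1 - w₀ / p - 1) (by linarith)
  exact csSup_eq_of_forall_le_of_forall_lt_exists_gt ⟨α, hα⟩ hub hlow

/-! ### The two saturating sequences -/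

/-- The sequence `g_{j,k} = 2^{-(s+d/2)j}`, of Besov norm one, all of whose coefficients at a given
scale are equal. -/
noncomputable def denseSeq (d : ℕ) (s : ℝ) : BSeq d :=
  fun j _ => (2 : ℝ) ^ (-((s + (d : ℝ) / 2) * (j : ℝ)))

/-- The sequence with `g_{j,0} = 2^{-(s-d/r+d/2)j}` and `g_{j,k} = 0` for `k ≠ 0`, of Besov norm
one, with a single nonzero coefficient at each scale. -/
noncomputable def sparseSeq (d : ℕ) (s r : ℝ) : BSeq d :=
  fun j k => if k = (fun _ => ⟨0, by positivity⟩) then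
    (2 : ℝ) ^ (-((s - (d : ℝ) / r + (d : ℝ) / 2) * (j : ℝ))) else 0

lemma memBesov_denseSeq {d : ℕ} {s r : ℝ} (hr : 0 < r) : MemBesov d s r (denseSeq d s) := by
  refine ⟨1, fun j => le_of_eq ?_⟩
  have h0 : (0 : ℝ) < 2 ^ (-((s + (d : ℝ) / 2) * (j : ℝ))) := by positivity
  simp only [besovNormAt, denseSeq, Finset.sum_const, Finset.card_univ, nsmul_eq_mul, card_fin_fun,
    abs_of_pos h0]
  rw [← Real.rpow_mul (by norm_num), ← Real.rpow_add (by norm_num), ← Real.rpow_mul (by norm_num),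
    ← Real.rpow_add (by norm_num)]
  convert Real.rpow_zero 2 using 2
  field_simp; ring

lemma memBesov_sparseSeq {d : ℕ} {s r : ℝ} (hr : 0 < r) : MemBesov d s r (sparseSeq d s r) := by
  refine ⟨1, fun j => le_of_eq ?_⟩
  set θ := s - (d : ℝ) / r + (d : ℝ) / 2 with hθ
  have h0 : (0 : ℝ) < 2 ^ (-(θ * (j : ℝ))) := by positivity
  have hsum : ∑ k, |sparseSeq d s r j k| ^ r = ((2 : ℝ) ^ (-(θ * (j : ℝ)))) ^ r := by
    rw [Finset.sum_eq_single (fun _ => ⟨0, by positivity⟩)]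
    · simp only [sparseSeq, if_true, ← hθ, abs_of_pos h0]
    · intro k _ hk
      rw [sparseSeq, if_neg hk, abs_zero, Real.zero_rpow hr.ne']
    · simp
  rw [besovNormAt, hsum, ← Real.rpow_mul h0.le, mul_one_div_cancel hr.ne', Real.rpow_one,
    ← Real.rpow_add (by norm_num), ← hθ]
  simp

lemma denseSeq_not_scaleBounded {d : ℕ} {s p w : ℝ}
    (h : w * (s + (d : ℝ) / 2) < (d : ℝ) * p / 2) :
    ¬ ScaleBounded d (s + (d : ℝ) / 2) p w (denseSeq d s) := by
  refine not_scaleBounded (sub_pos.2 h) fun j => le_of_eq ?_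
  have hc : (Nat.card {k : Fin d → Fin (2 ^ j) //
      (2 : ℝ) ^ (-((s + (d : ℝ) / 2) * (j : ℝ))) ≤ |denseSeq d s j k|} : ℝ) =
      (2 : ℝ) ^ ((d : ℝ) * (j : ℝ)) := by
    rw [← card_fin_fun, ← Nat.card_eq_fintype_card]
    congr 1
    exact Nat.card_congr (Equiv.subtypeUnivEquiv fun k => le_abs_self _)
  rw [hc, ← Real.rpow_add (by norm_num), ← Real.rpow_add (by norm_num)]
  congr 1; ring

lemma sparseSeq_not_scaleBounded {d : ℕ} {s r p w : ℝ}
    (h : w * (s - (d : ℝ) / r + (d : ℝ) / 2) < (d : ℝ) * p / 2 - d) :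
    ¬ ScaleBounded d (s - (d : ℝ) / r + (d : ℝ) / 2) p w (sparseSeq d s r) := by
  refine not_scaleBounded (sub_pos.2 h) fun j => ?_
  have hc : (1 : ℝ) ≤ (Nat.card {k : Fin d → Fin (2 ^ j) //
      (2 : ℝ) ^ (-((s - (d : ℝ) / r + (d : ℝ) / 2) * (j : ℝ))) ≤ |sparseSeq d s r j k|} : ℝ) := by
    have : Nonempty {k : Fin d → Fin (2 ^ j) //
        (2 : ℝ) ^ (-((s - (d : ℝ) / r + (d : ℝ) / 2) * (j : ℝ))) ≤ |sparseSeq d s r j k|} :=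
      ⟨⟨fun _ => ⟨0, by positivity⟩, by
        simp only [sparseSeq, if_true]; exact le_abs_self _⟩⟩
    exact_mod_cast Nat.card_pos
  refine le_trans (le_of_eq ?_) (le_mul_of_one_le_right (by positivity) hc)
  rw [← Real.rpow_add (by norm_num)]
  congr 1; ring

/-! ### The generic weak scaling function -/

/-- Generic validity of the weak scaling function: for `1 ≤ p < ∞`, `1 ≤ r < ∞`, `s > d/r`,
outside a Haar-null subset of `b^{s,∞}_r`, the weak scaling function
`s̃_c(p) = sup{α ∈ (0,1) : c ∈ W((1−α)p, p)}` equals `α̃`, where `α̃ = 2s/(2s+d)` if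
`r > pd/(2s+d)` and `α̃ = 2(s−d/r+d/p)/(2(s−d/r)+d)` otherwise. -/
theorem weakScalingFunction_generic (d : ℕ) (hd : 1 ≤ d) (p r s : ℝ) (hp : 1 ≤ p) (hr : 1 ≤ r)
    (hs : (d : ℝ) / r < s)
    (τ : TopologicalSpace (BesovSp d s r)) (hτ : IsBesovTopology d s r τ) :
    IsHaarNullBesov d s r τ
      {c : BesovSp d s r |
        sSup {α : ℝ | α ∈ Set.Ioo (0 : ℝ) 1 ∧ MemWBesov d ((1 - α) * p) p c.1}
          ≠ alphaTilde d s r p} := by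
  have hd0 : (1 : ℝ) ≤ d := by exact_mod_cast hd
  have hr0 : 0 < r := by linarith
  have hp0 : 0 < p := by linarith
  have hdr : 0 < (d : ℝ) / r := by positivity
  have hs0 : 0 < s := hdr.trans hs
  unfold alphaTilde
  split_ifs with hcase
  · -- Dense regime: `w₀ = pd/(2s+d) < r`.
    have hD : 0 < 2 * s + (d : ℝ) := by positivity
    have hα : 2 * s / (2 * s + (d : ℝ)) = 1 - p * d / (2 * s + d) / p := by field_simp; ring
    rw [hα]
    refine isHaarNull_of_critical (w₁ := r) (β := s + (d : ℝ) / 2) hr0 (by positivity) hp0 hτ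
      (by positivity) ?_ hcase ?_ (memBesov_denseSeq hr0) fun w hw =>
        denseSeq_not_scaleBounded ?_
    · rw [div_lt_iff₀ hD]; nlinarith
    · intro c hc w hw hwr
      refine memWBesov_dense hc (lt_trans (by positivity) hw) hwr.le ?_
      rw [div_lt_iff₀ hD] at hw; linarith
    · rw [lt_div_iff₀ hD] at hw; linarith
  · -- Sparse regime: `w₀ = d(p-2)/(2(s-d/r)+d) ≥ r`.
    push Not at hcase
    have hσ : 0 < s - (d : ℝ) / r := sub_pos.2 hs
    set σ := s - (d : ℝ) / r with hσdef
    have hD : 0 < 2 * σ + (d : ℝ) := by positivity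
    have hrw : r ≤ d * (p - 2) / (2 * σ + d) := by
      rw [le_div_iff₀ (by positivity)] at hcase ⊢
      have : r * σ = r * s - d := by rw [hσdef]; field_simp
      linarith
    have hα : 2 * (σ + (d : ℝ) / p) / (2 * σ + (d : ℝ)) =
        1 - d * (p - 2) / (2 * σ + d) / p := by field_simp; ring
    rw [hα]
    refine isHaarNull_of_critical (w₁ := d * (p - 2) / (2 * σ + d) + 1) (β := σ + (d : ℝ) / 2)
      hr0 (by positivity) hp0 hτ (hr0.trans_le hrw) ?_ (by linarith) ?_ (memBesov_sparseSeq hr0)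
        fun w hw => sparseSeq_not_scaleBounded ?_
    · rw [div_lt_iff₀ hD]; nlinarith
    · intro c hc w hw _
      refine memWBesov_sparse hc hr0 (hrw.trans hw.le) ?_
      rw [div_lt_iff₀ hD] at hw; rw [← hσdef]; linarith
    · rw [lt_div_iff₀ hD] at hw; rw [← hσdef]; linarith
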